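/- Let n₁ and n₂ be integers with n₁ > 2n₂ + 1 ≥ 5. Then pd(P_{n₁}⊙K_{n₂}) = n₂ + 2. -/

import Mathlib

/-!
Upper bound: the two ends of the path form singleton cells, and the remaining cells are indexed by
the vertices of `K_k`, the inner path vertices joining one of them. The two ends doubly resolve the
path, so the distances to them determine the position on the path and tell path vertices from copy
vertices; the cell separates the vertices of one copy.

Lower bound, over any connected graph `G` in place of the path: suppose there are at most `k + 1`
cells. Vertices of one copy of `K_k` are twins, so they lie in distinct cells. Say that a vertex `i`
of `G` misses the cell `m` if neither `i` nor its copy meets `m`; it then misses no other cell. Put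
`d = d(i, m)`. A vertex of the `i`-th copy has representation `0` at its own cell, `d + 1` at `m`
and `1` elsewhere, while `i` has `0` at its own cell, `d` at `m` and `1` elsewhere. Comparing these,
two vertices `i ≠ j` missing the same `m` satisfy `|d(i, m) - d(j, m)| ≥ 2`. If `d(i, m) ≥ 3`, a
neighbour of `i` also misses `m`, at a distance differing by at most one, which is impossible; so
`d(i, m) ∈ {1, 2}`, and each cell is missed by at most one vertex. At most one vertex misses no
cell, since copy vertices over such a vertex have representation `0` at their own cell and `1`
elsewhere, and any two copies share a cell because `2k > k + 1`. Hence `G` has at most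
`(k + 1) + 1` vertices.
-/

open SimpleGraph

/-- The corona product `G ⊙ H`: one copy of `G`, one copy of `H` for each vertex of `G`,
with the `i`-th vertex of `G` joined to every vertex of the `i`-th copy of `H`. -/
def corona {α β : Type*} (G : SimpleGraph α) (H : SimpleGraph β) :
    SimpleGraph (α ⊕ α × β) :=
  SimpleGraph.fromRel (fun x y =>
    match x, y with
    | Sum.inl a, Sum.inl b => G.Adj a b
    | Sum.inl a, Sum.inr iu => a = iu.1
    | Sum.inr iu, Sum.inr jw => iu.1 = jw.1 ∧ H.Adj iu.2 jw.2
    | _, _ => False)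

/-- The distance from a vertex to a set of vertices: `d(v,A) = min_{u ∈ A} d(v,u)`. -/
noncomputable def setDist {α : Type*} (G : SimpleGraph α) (v : α) (A : Set α) : ℕ :=
  sInf (G.dist v '' A)

/-- `S` is a resolving set for `G`: distinct vertices have distinct metric representations. -/
def IsResolvingSet {α : Type*} (G : SimpleGraph α) (S : Set α) : Prop :=
  ∀ u v : α, (∀ w ∈ S, G.dist u w = G.dist v w) → u = v

/-- The metric dimension of `G`: minimum cardinality of a resolving set. -/
noncomputable def metricDim {α : Type*} (G : SimpleGraph α) : ℕ :=
  sInf {k | ∃ S : Set α, IsResolvingSet G S ∧ S.ncard = k}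

/-- A family of sets is a resolving partition for `G` if it is a partition of the vertex set
into nonempty cells and distinct vertices have distinct partition representations. -/
def IsResolvingPartition {α : Type*} (G : SimpleGraph α) (P : Set (Set α)) : Prop :=
  (∀ A ∈ P, A.Nonempty) ∧ (∀ v : α, ∃! A : Set α, A ∈ P ∧ v ∈ A) ∧
    ∀ u v : α, (∀ A ∈ P, setDist G u A = setDist G v A) → u = v

/-- The partition dimension of `G`: minimum number of cells in a resolving partition. -/
noncomputable def partitionDim {α : Type*} (G : SimpleGraph α) : ℕ :=
  sInf {t | ∃ P : Set (Set α), IsResolvingPartition G P ∧ P.ncard = t}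

/-- `c(H)`: the maximum cardinality of a connected component of `H` which is isomorphic to a
complete graph (i.e. whose vertex set is a clique). -/
noncomputable def maxCompleteComp {β : Type*} (H : SimpleGraph β) : ℕ :=
  sSup {k | ∃ C : H.ConnectedComponent, H.IsClique C.supp ∧ C.supp.ncard = k}

/-- `β(H)`: the number of isolated vertices of `H`. -/
noncomputable def numIsolated {β : Type*} (H : SimpleGraph β) : ℕ :=
  Set.ncard {v : β | ∀ u, ¬ H.Adj v u}

/-- `α(H)`: the number of connected components of `H` of order greater than one. -/
noncomputable def numBigComp {β : Type*} (H : SimpleGraph β) : ℕ :=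
  Set.ncard {C : H.ConnectedComponent | 1 < C.supp.ncard}

section SetDist

variable {V : Type*} {G : SimpleGraph V} {u v w : V} {A : Set V}

theorem setDist_le_dist (hw : w ∈ A) : setDist G v A ≤ G.dist v w :=
  Nat.sInf_le ⟨w, hw, rfl⟩

theorem exists_dist_eq_setDist (G : SimpleGraph V) (v : V) (hA : A.Nonempty) :
    ∃ w ∈ A, G.dist v w = setDist G v A :=
  Nat.sInf_mem (hA.image _)

theorem setDist_singleton : setDist G v {w} = G.dist v w := by
  simp [setDist]

theorem setDist_eq_zero_iff (hG : G.Preconnected) (hA : A.Nonempty) :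
    setDist G v A = 0 ↔ v ∈ A := by
  refine ⟨fun h => ?_, fun hv => ?_⟩
  · obtain ⟨w, hw, hd⟩ := exists_dist_eq_setDist G v hA
    rw [h, (hG v w).dist_eq_zero_iff] at hd
    exact hd ▸ hw
  · simpa using setDist_le_dist (G := G) (v := v) hv

theorem setDist_eq_one_of_adj (hG : G.Preconnected) (hv : v ∉ A) (hw : w ∈ A)
    (h : G.Adj v w) : setDist G v A = 1 := by
  have hle : setDist G v A ≤ 1 := dist_eq_one_iff_adj.2 h ▸ setDist_le_dist hw
  have hne : setDist G v A ≠ 0 := (setDist_eq_zero_iff hG ⟨w, hw⟩).not.2 hv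
  omega

theorem setDist_le_setDist_add_one_of_adj (hA : A.Nonempty) (h : G.Adj v w) :
    setDist G v A ≤ setDist G w A + 1 := by
  obtain ⟨x, hx, hd⟩ := exists_dist_eq_setDist G w hA
  calc setDist G v A ≤ G.dist v x := setDist_le_dist hx
    _ ≤ G.dist v w + G.dist w x := h.reachable.dist_triangle_left x
    _ = setDist G w A + 1 := by rw [dist_eq_one_iff_adj.2 h, hd, add_comm]

theorem setDist_eq_setDist_add_one (hA : A.Nonempty)
    (h : ∀ w ∈ A, G.dist u w = G.dist v w + 1) : setDist G u A = setDist G v A + 1 := by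
  obtain ⟨x, hx, hux⟩ := exists_dist_eq_setDist G u hA
  obtain ⟨y, hy, hvy⟩ := exists_dist_eq_setDist G v hA
  have hle : setDist G u A ≤ G.dist u y := setDist_le_dist hy
  have hge : setDist G v A ≤ G.dist v x := setDist_le_dist hx
  rw [h y hy] at hle
  rw [h x hx] at hux
  omega

end SetDist

section Coloring

variable {V C : Type*} {G : SimpleGraph V} {c : V → C} {u v w : V}

/-- The partition representation of `v` with respect to the colour classes of `c`, as a function of
the colour. Ordered partitions are encoded by colourings, the cells being the fibres. -/
noncomputable def colorRep (G : SimpleGraph V) (c : V → C) (v : V) (s : C) : ℕ :=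
  setDist G v (c ⁻¹' {s})

/-- A colouring (not necessarily proper) whose colour classes form a resolving partition;
surjectivity says that no cell is empty. -/
structure IsResolvingColoring (G : SimpleGraph V) (c : V → C) : Prop where
  surjective : Function.Surjective c
  injective_colorRep : Function.Injective (colorRep G c)

theorem colorRep_le_dist : colorRep G c v (c w) ≤ G.dist v w :=
  setDist_le_dist rfl

theorem colorRep_eq_zero_iff (hG : G.Preconnected) : colorRep G c v (c w) = 0 ↔ c v = c w :=
  setDist_eq_zero_iff hG ⟨w, rfl⟩

theorem colorRep_eq_one_of_adj (hG : G.Preconnected) (h : G.Adj v w) (hc : c v ≠ c w) :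
    colorRep G c v (c w) = 1 :=
  setDist_eq_one_of_adj hG hc rfl h

theorem color_eq_of_colorRep_eq (hG : G.Preconnected) (h : colorRep G c u = colorRep G c v) :
    c u = c v := by
  rw [eq_comm, ← colorRep_eq_zero_iff hG, ← h, colorRep_eq_zero_iff hG]

theorem isResolvingColoring_id (hG : G.Preconnected) : IsResolvingColoring G (id : V → V) :=
  ⟨Function.surjective_id, fun _ _ h => color_eq_of_colorRep_eq hG h⟩

namespace IsResolvingColoring

theorem eq_of_color_eq (hc : IsResolvingColoring G c) (hG : G.Preconnected) (huv : c u = c v)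
    (h : ∀ s, s ≠ c u → colorRep G c u s = colorRep G c v s) : u = v := by
  refine hc.injective_colorRep (funext fun s => ?_)
  by_cases hs : s = c u
  · rw [hs, (colorRep_eq_zero_iff hG).2 rfl, (colorRep_eq_zero_iff hG).2 huv.symm]
  · exact h s hs

theorem color_ne_of_twins (hc : IsResolvingColoring G c) (hG : G.Preconnected) (huv : u ≠ v)
    (h : ∀ w, w ≠ u → w ≠ v → G.dist u w = G.dist v w) : c u ≠ c v := by
  intro hcuv
  refine huv (hc.eq_of_color_eq hG hcuv fun s hs => congrArg sInf (Set.image_congr fun w hw => ?_))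
  have hws : c w = s := hw
  refine h w ?_ ?_
  · rintro rfl
    exact hs hws.symm
  · rintro rfl
    exact hs (hws.symm.trans hcuv.symm)

theorem comp_equiv {D : Type*} (hc : IsResolvingColoring G c) (e : C ≃ D) :
    IsResolvingColoring G (e ∘ c) := by
  have hrep (v : V) (s : C) : colorRep G (e ∘ c) v (e s) = colorRep G c v s := by
    simp [colorRep, Set.preimage, e.injective.eq_iff]
  refine ⟨e.surjective.comp hc.surjective, fun u v h => hc.injective_colorRep (funext fun s => ?_)⟩
  rw [← hrep, ← hrep, h]

theorem isResolvingPartition_range (hc : IsResolvingColoring G c) :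
    IsResolvingPartition G (Set.range fun s => c ⁻¹' {s}) := by
  refine ⟨?_, fun v => ⟨c ⁻¹' {c v}, ⟨⟨c v, rfl⟩, rfl⟩, ?_⟩, fun u v h => ?_⟩
  · rintro _ ⟨s, rfl⟩
    exact hc.surjective s
  · rintro _ ⟨⟨s, rfl⟩, hv : c v = s⟩
    rw [hv]
  · exact hc.injective_colorRep (funext fun s => h _ ⟨s, rfl⟩)

theorem ncard_range_preimage (hc : IsResolvingColoring G c) :
    (Set.range fun s => c ⁻¹' {s}).ncard = Nat.card C := by
  have hinj : Function.Injective fun s => c ⁻¹' {s} :=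
    (Set.preimage_injective.2 hc.surjective).comp Set.singleton_injective
  exact Set.ncard_range_of_injective hinj

theorem partitionDim_le (hc : IsResolvingColoring G c) : partitionDim G ≤ Nat.card C :=
  Nat.sInf_le ⟨_, hc.isResolvingPartition_range, hc.ncard_range_preimage⟩

end IsResolvingColoring

theorem IsResolvingPartition.exists_isResolvingColoring {P : Set (Set V)}
    (hP : IsResolvingPartition G P) : ∃ c : V → P, IsResolvingColoring G c := by
  obtain ⟨hne, hcell, hres⟩ := hP
  choose cell hcell hunique using hcell
  let c : V → P := fun v => ⟨cell v, (hcell v).1⟩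
  have hfiber (A : P) : c ⁻¹' {A} = A := by
    ext v
    refine ⟨?_, fun hv => Subtype.ext (hunique v A ⟨A.2, hv⟩).symm⟩
    rintro rfl
    exact (hcell v).2
  refine ⟨c, fun A => ?_, fun u v h => hres u v fun A hA => ?_⟩
  · obtain ⟨v, hv⟩ := hne A A.2
    exact ⟨v, (hfiber A).ge hv⟩
  · simpa only [colorRep, hfiber] using congrFun h ⟨A, hA⟩

theorem exists_isResolvingColoring_partitionDim [Finite V] (hG : G.Preconnected) :
    ∃ c : V → Fin (partitionDim G), IsResolvingColoring G c := by
  obtain ⟨P, hP, hcard⟩ : ∃ P, IsResolvingPartition G P ∧ P.ncard = partitionDim G :=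
    Nat.sInf_mem (s := {t | ∃ P, IsResolvingPartition G P ∧ P.ncard = t})
      ⟨_, _, (isResolvingColoring_id hG).isResolvingPartition_range, rfl⟩
  obtain ⟨c, hc⟩ := hP.exists_isResolvingColoring
  exact ⟨_, hc.comp_equiv (Finite.equivFinOfCardEq hcard)⟩

end Coloring

section CoronaDistance

variable {α β : Type*} {G : SimpleGraph α} {H : SimpleGraph β}

@[simp]
theorem corona_adj_inl_inl {i j : α} : (corona G H).Adj (.inl i) (.inl j) ↔ G.Adj i j := by
  simp only [corona, fromRel_adj, ne_eq, Sum.inl.injEq, G.adj_comm j i, or_self,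
    and_iff_right_iff_imp]
  exact Adj.ne

@[simp]
theorem corona_adj_inl_inr {i : α} {q : α × β} : (corona G H).Adj (.inl i) (.inr q) ↔ i = q.1 := by
  simp [corona]

@[simp]
theorem corona_adj_inr_inl {p : α × β} {j : α} : (corona G H).Adj (.inr p) (.inl j) ↔ p.1 = j := by
  rw [adj_comm, corona_adj_inl_inr, eq_comm]

@[simp]
theorem corona_adj_inr_inr {p q : α × β} :
    (corona G H).Adj (.inr p) (.inr q) ↔ p.1 = q.1 ∧ H.Adj p.2 q.2 := by
  simp only [corona, fromRel_adj, ne_eq, Sum.inr.injEq, H.adj_comm q.2, eq_comm (a := q.1),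
    or_self, and_iff_right_iff_imp]
  rintro ⟨-, h⟩ rfl
  exact h.ne rfl

/-- The vertex of `G` over which a vertex of `G ⊙ H` lies: the retraction of the corona onto `G`. -/
def coronaBase : α ⊕ α × β → α :=
  Sum.elim id Prod.fst

@[simp]
theorem coronaBase_inl (i : α) : coronaBase (.inl i : α ⊕ α × β) = i := rfl

@[simp]
theorem coronaBase_inr (p : α × β) : coronaBase (.inr p) = p.1 := rfl

theorem coronaBase_eq_or_adj {x y : α ⊕ α × β} (h : (corona G H).Adj x y) :
    coronaBase x = coronaBase y ∨ G.Adj (coronaBase x) (coronaBase y) := by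
  rcases x with i | p <;> rcases y with j | q <;> simp_all

/-- The inclusion of `G` into `G ⊙ H`. -/
def coronaInl (G : SimpleGraph α) (H : SimpleGraph β) : G →g corona G H where
  toFun := .inl
  map_rel' := corona_adj_inl_inl.2

theorem corona_preconnected (hG : G.Preconnected) : (corona G H).Preconnected := by
  have hbase (x : α ⊕ α × β) : (corona G H).Reachable x (.inl (coronaBase x)) := by
    rcases x with i | p
    · rfl
    · exact (corona_adj_inr_inl.2 rfl).reachable
  exact fun x y => (hbase x).trans (((hG _ _).map (coronaInl G H)).trans (hbase y).symm)

theorem dist_coronaBase_le_length {x y : α ⊕ α × β}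
    (p : (corona G H).Walk x y) : G.dist (coronaBase x) (coronaBase y) ≤ p.length := by
  induction p with
  | nil => simp
  | @cons x y z h p ih =>
    rw [Walk.length_cons]
    rcases coronaBase_eq_or_adj h with hxy | hxy
    · rw [hxy]
      exact ih.trans (Nat.le_succ _)
    · have htri := hxy.reachable.dist_triangle_left (coronaBase z)
      rw [dist_eq_one_iff_adj.2 hxy] at htri
      omega

theorem corona_dist_inl_inl (hG : G.Preconnected) (i j : α) :
    (corona G H).dist (.inl i) (.inl j) = G.dist i j := by
  refine le_antisymm ?_ ?_
  · obtain ⟨p, hp⟩ := (hG i j).exists_walk_length_eq_dist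
    rw [← hp, ← Walk.length_map (coronaInl G H)]
    exact dist_le _
  · obtain ⟨p, hp⟩ := (corona_preconnected (H := H) hG (.inl i) (.inl j)).exists_walk_length_eq_dist
    exact hp ▸ dist_coronaBase_le_length p

theorem dist_inl_lt_length_of_walk_inr {i : α} {b : β} {w : α ⊕ α × β}
    (hw : ∀ b, w ≠ .inr (i, b)) (p : (corona G H).Walk (.inr (i, b)) w) :
    (corona G H).dist (.inl i) w < p.length := by
  generalize hx : (Sum.inr (i, b) : α ⊕ α × β) = x at p
  induction p generalizing b with
  | nil => exact absurd hx.symm (hw b)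
  | @cons x y w h p ih =>
    subst hx
    rw [Walk.length_cons]
    rcases y with j | ⟨j, d⟩
    · obtain rfl : i = j := corona_adj_inr_inl.1 h
      exact Nat.lt_succ_of_le (dist_le p)
    · obtain rfl : i = j := (corona_adj_inr_inr.1 h).1
      exact (ih hw rfl).trans (Nat.lt_succ_self _)

/-- The `i`-th vertex of `G` separates the `i`-th copy of `H` from the rest of the corona. -/
theorem corona_dist_inr (hG : G.Preconnected) {i : α} (b : β) {w : α ⊕ α × β}
    (hw : ∀ b, w ≠ .inr (i, b)) :
    (corona G H).dist (.inr (i, b)) w = (corona G H).dist (.inl i) w + 1 := by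
  have hadj : (corona G H).Adj (.inr (i, b)) (.inl i) := corona_adj_inr_inl.2 rfl
  refine le_antisymm ?_ ?_
  · have htri := hadj.reachable.dist_triangle_left w
    rwa [dist_eq_one_iff_adj.2 hadj, add_comm] at htri
  · obtain ⟨p, hp⟩ := (corona_preconnected hG (.inr (i, b)) w).exists_walk_length_eq_dist
    exact hp ▸ dist_inl_lt_length_of_walk_inr hw p

theorem corona_dist_inr_inl (hG : G.Preconnected) (p : α × β) (j : α) :
    (corona G H).dist (.inr p) (.inl j) = G.dist p.1 j + 1 := by
  rw [corona_dist_inr hG _ (fun _ => Sum.inl_ne_inr), corona_dist_inl_inl hG]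

end CoronaDistance

section UpperBound

variable {α β : Type*} {G : SimpleGraph α} {x y : α} {b : β}

/-- The pair `x`, `y` doubly resolves `G`: every vertex `i` is determined by the difference
`d(i, x) - d(i, y)`. The subtraction is avoided by moving terms across the equation. -/
def DoublyResolves (G : SimpleGraph α) (x y : α) : Prop :=
  ∀ i j, G.dist i x + G.dist j y = G.dist j x + G.dist i y → i = j

/-- The colouring of `G ⊙ H` in which `x` and `y` are alone in their classes, the vertices of each
copy of `H` have distinct colours, and the rest of `G` shares the colour of `b`. -/
def pairColoring [DecidableEq α] (x y : α) (b : β) : α ⊕ α × β → Option (Option β)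
  | .inl i => if i = x then none else if i = y then some none else some (some b)
  | .inr p => some (some p.2)

theorem pairColoring_preimage_none [DecidableEq α] :
    pairColoring x y b ⁻¹' {none} = {.inl x} := by
  ext (i | p) <;> grind [pairColoring]

theorem pairColoring_preimage_some_none [DecidableEq α] (hxy : x ≠ y) :
    pairColoring x y b ⁻¹' {some none} = {.inl y} := by
  ext (i | p) <;> grind [pairColoring]

theorem pairColoring_surjective [DecidableEq α] (hxy : x ≠ y) :
    Function.Surjective (pairColoring x y b) := by
  rintro (_ | _ | d)
  · exact ⟨.inl x, by simp [pairColoring]⟩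
  · exact ⟨.inl y, by simp [pairColoring, hxy.symm]⟩
  · exact ⟨.inr (x, d), rfl⟩

theorem DoublyResolves.isResolvingColoring_pairColoring [DecidableEq α]
    (h : DoublyResolves G x y) (H : SimpleGraph β) (hG : G.Preconnected) (hxy : x ≠ y) :
    IsResolvingColoring (corona G H) (pairColoring x y b) := by
  refine ⟨pairColoring_surjective hxy, fun u v huv => ?_⟩
  have hcolor := color_eq_of_colorRep_eq (corona_preconnected hG) huv
  have hx : (corona G H).dist u (.inl x) = (corona G H).dist v (.inl x) := by
    simpa only [colorRep, pairColoring_preimage_none, setDist_singleton] using congrFun huv none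
  have hy : (corona G H).dist u (.inl y) = (corona G H).dist v (.inl y) := by
    simpa only [colorRep, pairColoring_preimage_some_none hxy, setDist_singleton]
      using congrFun huv (some none)
  have hbase : coronaBase u = coronaBase v := by
    apply h
    rcases u with i | p <;> rcases v with j | q <;>
      simp only [corona_dist_inl_inl hG, corona_dist_inr_inl hG] at hx hy <;>
      simp only [coronaBase_inl, coronaBase_inr] <;> omega
  rcases u with i | ⟨i, a⟩ <;> rcases v with j | ⟨j, d⟩ <;> obtain rfl : i = j := hbase
  · rfl
  · simp [corona_dist_inl_inl hG, corona_dist_inr_inl hG] at hx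
  · simp [corona_dist_inl_inl hG, corona_dist_inr_inl hG] at hx
  · simpa [pairColoring] using hcolor

theorem DoublyResolves.partitionDim_corona_le [Finite β] [Nonempty β] (h : DoublyResolves G x y)
    (H : SimpleGraph β) (hG : G.Preconnected) (hxy : x ≠ y) :
    partitionDim (corona G H) ≤ Nat.card β + 2 := by
  classical
  have hc := h.isResolvingColoring_pairColoring (b := Classical.arbitrary β) H hG hxy
  simpa only [Finite.card_option] using hc.partitionDim_le

end UpperBound

section Path

variable {n : ℕ}

theorem le_add_length_of_pathGraph_walk {i j : Fin n} (p : (pathGraph n).Walk i j) :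
    (j : ℕ) ≤ i + p.length := by
  induction p with
  | nil => simp
  | cons h p ih =>
    rw [pathGraph_adj] at h
    rw [Walk.length_cons]
    omega

theorem pathGraph_dist_add {i j : Fin n} {d : ℕ} (h : (i : ℕ) + d = j) :
    (pathGraph n).dist i j = d := by
  refine le_antisymm ?_ ?_
  · induction d generalizing j with
    | zero => simp [Fin.ext h]
    | succ d ih =>
      let k : Fin n := ⟨i + d, by omega⟩
      have hadj : (pathGraph n).Adj k j := pathGraph_adj.2 (.inl h)
      have htri := hadj.reachable.dist_triangle_right i
      rw [dist_eq_one_iff_adj.2 hadj] at htri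
      exact htri.trans (Nat.succ_le_succ (ih rfl))
  · obtain ⟨p, hp⟩ := (pathGraph_preconnected n i j).exists_walk_length_eq_dist
    have hle := le_add_length_of_pathGraph_walk p
    omega

theorem pathGraph_doublyResolves_zero_last :
    DoublyResolves (pathGraph (n + 1)) 0 (Fin.last n) := by
  intro i j h
  have hzero (k : Fin (n + 1)) : (pathGraph (n + 1)).dist k 0 = k :=
    dist_comm.trans (pathGraph_dist_add (zero_add _))
  have hlast (k : Fin (n + 1)) : (pathGraph (n + 1)).dist k (Fin.last n) = n - k :=
    pathGraph_dist_add (Nat.add_sub_of_le k.is_le)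
  rw [hzero, hzero, hlast, hlast] at h
  omega

theorem partitionDim_corona_pathGraph_le {β : Type*} [Finite β] [Nonempty β] (H : SimpleGraph β)
    (hn : 2 ≤ n) : partitionDim (corona (pathGraph n) H) ≤ Nat.card β + 2 := by
  obtain ⟨m, rfl⟩ := Nat.exists_eq_add_of_le' hn
  exact pathGraph_doublyResolves_zero_last.partitionDim_corona_le H (pathGraph_preconnected _)
    Fin.last_pos.ne

end Path

section LowerBound

variable {α β C : Type*} {G : SimpleGraph α} {c : α ⊕ α × β → C} {i j : α} {m s : C}
  {x y : α ⊕ α × β}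

/-- No vertex over `i`, neither the vertex `i` of `G` nor one of its copy of `H`, has colour `m`. -/
def Misses (c : α ⊕ α × β → C) (i : α) (m : C) : Prop :=
  ∀ x, coronaBase x = i → c x ≠ m

theorem corona_top_adj_of_coronaBase_eq (hxy : x ≠ y) (h : coronaBase x = coronaBase y) :
    (corona G (⊤ : SimpleGraph β)).Adj x y := by
  rcases x with i | ⟨i, a⟩ <;> rcases y with j | ⟨j, b⟩ <;> obtain rfl : i = j := h <;> simp_all

theorem colorRep_eq_one_of_not_misses (hG : G.Preconnected) (hs : ¬ Misses c (coronaBase x) s)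
    (hx : c x ≠ s) : colorRep (corona G ⊤) c x s = 1 := by
  simp only [Misses, not_forall, not_not] at hs
  obtain ⟨y, hyx, rfl⟩ := hs
  refine colorRep_eq_one_of_adj (corona_preconnected hG)
    (corona_top_adj_of_coronaBase_eq ?_ hyx.symm) hx
  rintro rfl
  exact hx rfl

namespace IsResolvingColoring

theorem injective_copy (hc : IsResolvingColoring (corona G (⊤ : SimpleGraph β)) c)
    (hG : G.Preconnected) (i : α) : Function.Injective fun b => c (.inr (i, b)) := by
  intro a b hab
  by_contra hne
  refine hc.color_ne_of_twins (corona_preconnected hG) (by simpa using hne) (fun w ha hb => ?_) hab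
  by_cases hw : ∃ d, w = .inr (i, d)
  · obtain ⟨d, rfl⟩ := hw
    rw [dist_eq_one_iff_adj.2 (corona_top_adj_of_coronaBase_eq ha.symm rfl),
      dist_eq_one_iff_adj.2 (corona_top_adj_of_coronaBase_eq hb.symm rfl)]
  · rw [not_exists] at hw
    rw [corona_dist_inr hG a hw, corona_dist_inr hG b hw]

theorem eq_of_forall_misses (hc : IsResolvingColoring (corona G (⊤ : SimpleGraph β)) c)
    (hG : G.Preconnected) (hxy : c x = c y)
    (h : ∀ s, Misses c (coronaBase x) s ∨ Misses c (coronaBase y) s →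
      colorRep (corona G ⊤) c x s = colorRep (corona G ⊤) c y s) : x = y := by
  refine hc.eq_of_color_eq (corona_preconnected hG) hxy fun s hs => ?_
  by_cases hmiss : Misses c (coronaBase x) s ∨ Misses c (coronaBase y) s
  · exact h s hmiss
  · rw [not_or] at hmiss
    rw [colorRep_eq_one_of_not_misses hG hmiss.1 hs.symm,
      colorRep_eq_one_of_not_misses hG hmiss.2 (hxy ▸ hs.symm)]

theorem colorRep_inr_of_misses (hc : IsResolvingColoring (corona G (⊤ : SimpleGraph β)) c)
    (hG : G.Preconnected) (hi : Misses c i m) (b : β) :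
    colorRep (corona G ⊤) c (.inr (i, b)) m = colorRep (corona G ⊤) c (.inl i) m + 1 := by
  refine setDist_eq_setDist_add_one (hc.surjective m) fun w hw => corona_dist_inr hG b ?_
  rintro d rfl
  exact hi _ rfl hw

variable [Fintype β] [Fintype C]

theorem exists_copy_color_eq (hc : IsResolvingColoring (corona G (⊤ : SimpleGraph β)) c)
    (hG : G.Preconnected) (hcard : Fintype.card C ≤ Fintype.card β + 1) (hi : Misses c i m)
    (hs : s ≠ m) : ∃ b, c (.inr (i, b)) = s := by
  classical
  have hsub : Finset.univ.image (fun b => c (.inr (i, b))) ⊆ {m}ᶜ := by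
    intro t ht
    obtain ⟨b, -, rfl⟩ := Finset.mem_image.1 ht
    simpa using hi (.inr (i, b)) rfl
  have heq : Finset.univ.image (fun b => c (.inr (i, b))) = {m}ᶜ := by
    refine Finset.eq_of_subset_of_card_le hsub ?_
    rw [Finset.card_image_of_injective _ (hc.injective_copy hG i), Finset.card_compl,
      Finset.card_singleton, Finset.card_univ]
    omega
  simpa using heq.ge (by simpa using hs)

theorem eq_color_of_misses (hc : IsResolvingColoring (corona G (⊤ : SimpleGraph β)) c)
    (hG : G.Preconnected) (hcard : Fintype.card C ≤ Fintype.card β + 1) (hm : Misses c i m)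
    (hs : Misses c i s) : s = m := by
  by_contra hne
  obtain ⟨b, hb⟩ := hc.exists_copy_color_eq hG hcard hm hne
  exact hs _ rfl hb

theorem eq_of_misses_of_colorRep_eq (hc : IsResolvingColoring (corona G (⊤ : SimpleGraph β)) c)
    (hG : G.Preconnected) (hcard : Fintype.card C ≤ Fintype.card β + 1)
    (hx : Misses c (coronaBase x) m) (hy : Misses c (coronaBase y) m) (hxy : c x = c y)
    (h : colorRep (corona G ⊤) c x m = colorRep (corona G ⊤) c y m) : x = y := by
  refine hc.eq_of_forall_misses hG hxy fun s hs => ?_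
  obtain rfl : s = m := hs.elim (hc.eq_color_of_misses hG hcard hx)
    (hc.eq_color_of_misses hG hcard hy)
  exact h

theorem colorRep_inl_ne_of_misses [Nonempty β]
    (hc : IsResolvingColoring (corona G (⊤ : SimpleGraph β)) c) (hG : G.Preconnected)
    (hcard : Fintype.card C ≤ Fintype.card β + 1) (hi : Misses c i m) (hj : Misses c j m)
    (hij : i ≠ j) : colorRep (corona G ⊤) c (.inl i) m ≠ colorRep (corona G ⊤) c (.inl j) m := by
  intro h
  let a : β := Classical.arbitrary β
  obtain ⟨b, hb⟩ := hc.exists_copy_color_eq hG hcard hj (hi (.inr (i, a)) rfl)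
  have heq : (.inr (i, a) : α ⊕ α × β) = .inr (j, b) :=
    hc.eq_of_misses_of_colorRep_eq hG hcard hi hj hb.symm (by
      rw [hc.colorRep_inr_of_misses hG hi, hc.colorRep_inr_of_misses hG hj, h])
  exact hij (congrArg coronaBase heq)

theorem colorRep_inl_ne_add_one_of_misses
    (hc : IsResolvingColoring (corona G (⊤ : SimpleGraph β)) c) (hG : G.Preconnected)
    (hcard : Fintype.card C ≤ Fintype.card β + 1) (hi : Misses c i m) (hj : Misses c j m) :
    colorRep (corona G ⊤) c (.inl j) m ≠ colorRep (corona G ⊤) c (.inl i) m + 1 := by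
  intro h
  obtain ⟨b, hb⟩ := hc.exists_copy_color_eq hG hcard hi (hj (.inl j) rfl)
  refine Sum.inr_ne_inl (hc.eq_of_misses_of_colorRep_eq hG hcard (x := .inr (i, b)) hi hj hb ?_)
  rw [hc.colorRep_inr_of_misses hG hi, h]

theorem colorRep_inl_gap_of_misses [Nonempty β]
    (hc : IsResolvingColoring (corona G (⊤ : SimpleGraph β)) c) (hG : G.Preconnected)
    (hcard : Fintype.card C ≤ Fintype.card β + 1) (hi : Misses c i m) (hj : Misses c j m)
    (hij : i ≠ j) :
    colorRep (corona G ⊤) c (.inl i) m + 2 ≤ colorRep (corona G ⊤) c (.inl j) m ∨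
      colorRep (corona G ⊤) c (.inl j) m + 2 ≤ colorRep (corona G ⊤) c (.inl i) m := by
  have hne := hc.colorRep_inl_ne_of_misses hG hcard hi hj hij
  have hj_ne := hc.colorRep_inl_ne_add_one_of_misses hG hcard hi hj
  have hi_ne := hc.colorRep_inl_ne_add_one_of_misses hG hcard hj hi
  omega

theorem colorRep_inl_le_two_of_misses [Nonempty β] [Nontrivial α]
    (hc : IsResolvingColoring (corona G (⊤ : SimpleGraph β)) c) (hG : G.Preconnected)
    (hcard : Fintype.card C ≤ Fintype.card β + 1) (hi : Misses c i m) :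
    colorRep (corona G ⊤) c (.inl i) m ≤ 2 := by
  by_contra! hfar
  obtain ⟨j, hij⟩ := hG.exists_adj_of_nontrivial i
  have hadj : (corona G (⊤ : SimpleGraph β)).Adj (.inl i) (.inl j) := corona_adj_inl_inl.2 hij
  have hne : (c ⁻¹' {m}).Nonempty := hc.surjective m
  have hle : colorRep (corona G ⊤) c (.inl i) m ≤ colorRep (corona G ⊤) c (.inl j) m + 1 :=
    setDist_le_setDist_add_one_of_adj hne hadj
  have hge : colorRep (corona G ⊤) c (.inl j) m ≤ colorRep (corona G ⊤) c (.inl i) m + 1 :=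
    setDist_le_setDist_add_one_of_adj hne hadj.symm
  have hj : Misses c j m := by
    rintro x rfl rfl
    have hx : colorRep (corona G ⊤) c (.inl (coronaBase x)) (c x) ≤ 1 := by
      refine colorRep_le_dist.trans ?_
      by_cases hxb : .inl (coronaBase x) = x
      · simp [hxb]
      · exact (dist_eq_one_iff_adj.2 (corona_top_adj_of_coronaBase_eq hxb rfl)).le
    omega
  have hgap := hc.colorRep_inl_gap_of_misses hG hcard hi hj hij.ne
  omega

theorem eq_of_misses [Nonempty β] [Nontrivial α]
    (hc : IsResolvingColoring (corona G (⊤ : SimpleGraph β)) c) (hG : G.Preconnected)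
    (hcard : Fintype.card C ≤ Fintype.card β + 1) (hi : Misses c i m) (hj : Misses c j m) :
    i = j := by
  by_contra hij
  have hpos {k : α} (hk : Misses c k m) : colorRep (corona G ⊤) c (.inl k) m ≠ 0 := by
    obtain ⟨w, rfl⟩ := hc.surjective m
    exact (colorRep_eq_zero_iff (corona_preconnected hG)).not.2 (hk _ rfl)
  have hgap := hc.colorRep_inl_gap_of_misses hG hcard hi hj hij
  have hi_le := hc.colorRep_inl_le_two_of_misses hG hcard hi
  have hj_le := hc.colorRep_inl_le_two_of_misses hG hcard hj
  have hi_pos := hpos hi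
  have hj_pos := hpos hj
  omega

theorem exists_copies_color_eq [Nontrivial β]
    (hc : IsResolvingColoring (corona G (⊤ : SimpleGraph β)) c) (hG : G.Preconnected)
    (hcard : Fintype.card C ≤ Fintype.card β + 1) (i j : α) :
    ∃ a b, c (.inr (i, a)) = c (.inr (j, b)) := by
  by_contra! hdisj
  have hinj := (hc.injective_copy hG i).sumElim (hc.injective_copy hG j) hdisj
  have hle := Fintype.card_le_of_injective _ hinj
  have hβ : 1 < Fintype.card β := Fintype.one_lt_card
  rw [Fintype.card_sum] at hle
  omega

theorem eq_of_forall_not_misses [Nontrivial β]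
    (hc : IsResolvingColoring (corona G (⊤ : SimpleGraph β)) c) (hG : G.Preconnected)
    (hcard : Fintype.card C ≤ Fintype.card β + 1) (hi : ∀ s, ¬ Misses c i s)
    (hj : ∀ s, ¬ Misses c j s) : i = j := by
  obtain ⟨a, b, hab⟩ := hc.exists_copies_color_eq hG hcard i j
  have heq : (.inr (i, a) : α ⊕ α × β) = .inr (j, b) :=
    hc.eq_of_forall_misses hG hab fun s hs => (hs.elim (hi s) (hj s)).elim
  exact congrArg coronaBase heq

theorem card_le_card_color_add_one [Fintype α] [Nontrivial α] [Nontrivial β]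
    (hc : IsResolvingColoring (corona G (⊤ : SimpleGraph β)) c) (hG : G.Preconnected)
    (hcard : Fintype.card C ≤ Fintype.card β + 1) : Fintype.card α ≤ Fintype.card C + 1 := by
  let MissesExactly (i : α) (o : Option C) : Prop := o.elim (∀ s, ¬ Misses c i s) (Misses c i)
  have hexists (i : α) : ∃ o, MissesExactly i o := by
    by_cases hi : ∃ m, Misses c i m
    · exact ⟨some hi.choose, hi.choose_spec⟩
    · exact ⟨none, not_exists.1 hi⟩
  choose f hf using hexists
  have hinj : Function.Injective f := by
    intro i j hij
    have hi : MissesExactly i (f j) := hij ▸ hf i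
    have hj := hf j
    generalize f j = o at hi hj
    rcases o with _ | m
    · exact hc.eq_of_forall_not_misses hG hcard hi hj
    · exact hc.eq_of_misses hG hcard hi hj
  simpa only [Fintype.card_option] using Fintype.card_le_of_injective f hinj

end IsResolvingColoring

theorem card_add_two_le_partitionDim_corona_top [Fintype α] [Fintype β] [Nontrivial β]
    (hG : G.Preconnected) (h : Fintype.card β + 2 < Fintype.card α) :
    Fintype.card β + 2 ≤ partitionDim (corona G (⊤ : SimpleGraph β)) := by
  by_contra! hlt
  have : Nontrivial α := Fintype.one_lt_card_iff_nontrivial.1 (by omega)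
  obtain ⟨c, hc⟩ := exists_isResolvingColoring_partitionDim
    (corona_preconnected (H := (⊤ : SimpleGraph β)) hG)
  have hle := hc.card_le_card_color_add_one hG (by simpa using Nat.le_of_lt_succ hlt)
  rw [Fintype.card_fin] at hle
  omega

end LowerBound

theorem stmt11_general {n : ℕ} {β : Type*} [Fintype β] [Nontrivial β]
    (h : Fintype.card β + 2 < n) :
    partitionDim (corona (pathGraph n) (⊤ : SimpleGraph β)) = Fintype.card β + 2 := by
  refine le_antisymm ?_ ?_
  · rw [← Nat.card_eq_fintype_card]
    exact partitionDim_corona_pathGraph_le ⊤ (by omega)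
  · exact card_add_two_le_partitionDim_corona_top (pathGraph_preconnected n) (by simpa using h)

/-- If `n₁ > 2n₂ + 1 ≥ 5`, then `pd(P_{n₁}⊙K_{n₂}) = n₂ + 2`. -/
theorem stmt11 (n₁ n₂ : ℕ) (h₁ : n₁ > 2 * n₂ + 1) (h₂ : 2 * n₂ + 1 ≥ 5) :
    partitionDim (corona (pathGraph n₁) (⊤ : SimpleGraph (Fin n₂))) = n₂ + 2 := by
  have : Nontrivial (Fin n₂) := Fin.nontrivial_iff_two_le.2 (by omega)
  simpa using stmt11_general (n := n₁) (β := Fin n₂) (by rw [Fintype.card_fin]; omega)
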